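/- arXiv:2408.02506 — 3 statements merged into one kernel-verified Lean document; each statement's English description precedes it below -/
import Mathlib

section
/- Non-signalling bipartite superchannels preserve non-signalling channels (Choi/link-product form): let A₀, Ā₀, Ā₁, A₁, B₀, B̄₀, B̄₁, B₁ be finite nonempty types and let J^Θ, indexed by A₀ × Ā₀ × Ā₁ × A₁ × B₀ × B̄₀ × B̄₁ × B₁, satisfy: (i) J^Θ is positive semidefinite; (ii) Tr_{Ā₀ A₁ B̄₀ B₁} J^Θ = I_{A₀ Ā₁ B₀ B̄₁}; (iii) Tr_{Ā₀ A₁} J^Θ = π_{A₀} ⊗ Tr_{A₀ Ā₀ A₁} J^Θ; (iv) Tr_{A₁} J^Θ = π_{Ā₁} ⊗ Tr_{Ā₁ A₁} J^Θ; (v) Tr_{B̄₀ B₁} J^Θ = π_{B₀} ⊗ Tr_{B₀ B̄₀ B₁} J^Θ; (vi) Tr_{B₁} J^Θ = π_{B̄₁} ⊗ Tr_{B̄₁ B₁} J^Θ. Let J^N, indexed by Ā₀ × Ā₁ × B̄₀ × B̄₁, be the Choi matrix of a bipartite channel satisfying the non-signalling conditions. Define the link product J^out, indexed by A₀ × A₁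 × B₀ × B₁, by J^out(x, x') = ∑_{ȳ, ȳ'} J^Θ(ι(x, ȳ), ι(x', ȳ')) · J^N(ȳ', ȳ), where ȳ, ȳ' range over Ā₀ × Ā₁ × B̄₀ × B̄₁ and ι interleaves the indices into the order A₀, Ā₀, Ā₁, A₁, B₀, B̄₀, B̄₁, B₁. Then J^out is positive semidefinite, Tr_{A₁B₁} J^out = I_{A₀B₀}, and J^out satisfies the non-signalling conditions: Tr_{A₁} J^out = π_{A₀} ⊗ Tr_{A₀A₁} J^out and Tr_{B₁} J^out = π_{B₀} ⊗ Tr_{B₀B₁} J^out. -/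
open Matrix
open scoped ComplexOrder

noncomputable section

/-- Loewner order on complex matrices: `M ≤ N` iff `N - M` is positive semidefinite. -/
def LoewnerLE {n : Type*} [Fintype n] (M N : Matrix n n ℂ) : Prop := (N - M).PosSemidef

/-- `π_S ⊗ X`, the maximally mixed state on `S` tensored with `X`. -/
def piFst {S T : Type*} [Fintype S] [DecidableEq S] (X : Matrix T T ℂ) :
    Matrix (S × T) (S × T) ℂ :=
  fun x y => ((Fintype.card S : ℂ))⁻¹ * (if x.1 = y.1 then 1 else 0) * X x.2 y.2

/-- `I_S ⊗ X`, the identity on `S` tensored with `X`. -/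
def idFst {S T : Type*} [DecidableEq S] (X : Matrix T T ℂ) :
    Matrix (S × T) (S × T) ℂ :=
  fun x y => (if x.1 = y.1 then 1 else 0) * X x.2 y.2

/-- Partial trace over the second tensor factor. -/
def trOut {S T : Type*} [Fintype T] (X : Matrix (S × T) (S × T) ℂ) : Matrix S S ℂ :=
  fun s s' => ∑ t : T, X (s, t) (s', t)

/-- Partial trace over the first tensor factor. -/
def trInp {S T : Type*} [Fintype S] (X : Matrix (S × T) (S × T) ℂ) : Matrix T T ℂ :=
  fun t t' => ∑ s : S, X (s, t) (s, t')

section FourSystems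

variable {A₀ A₁ B₀ B₁ : Type*} [Fintype A₀] [Fintype A₁] [Fintype B₀] [Fintype B₁]
  [DecidableEq A₀] [DecidableEq A₁] [DecidableEq B₀] [DecidableEq B₁]

/-- `Tr_{A₁}` of a matrix on `A₀ × A₁ × B₀ × B₁`. -/
def trA1 (J : Matrix (A₀ × A₁ × B₀ × B₁) (A₀ × A₁ × B₀ × B₁) ℂ) :
    Matrix (A₀ × B₀ × B₁) (A₀ × B₀ × B₁) ℂ :=
  fun x y => ∑ a : A₁, J (x.1, a, x.2) (y.1, a, y.2)

/-- `Tr_{B₁}` of a matrix on `A₀ × A₁ × B₀ × B₁`. -/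
def trB1 (J : Matrix (A₀ × A₁ × B₀ × B₁) (A₀ × A₁ × B₀ × B₁) ℂ) :
    Matrix (A₀ × A₁ × B₀) (A₀ × A₁ × B₀) ℂ :=
  fun x y => ∑ b : B₁, J (x.1, x.2.1, x.2.2, b) (y.1, y.2.1, y.2.2, b)

/-- `Tr_{A₀A₁}` of a matrix on `A₀ × A₁ × B₀ × B₁`. -/
def trA0A1 (J : Matrix (A₀ × A₁ × B₀ × B₁) (A₀ × A₁ × B₀ × B₁) ℂ) :
    Matrix (B₀ × B₁) (B₀ × B₁) ℂ :=
  fun x y => ∑ a₀ : A₀, ∑ a₁ : A₁, J (a₀, a₁, x) (a₀, a₁, y)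

/-- `Tr_{B₀B₁}` of a matrix on `A₀ × A₁ × B₀ × B₁`. -/
def trB0B1 (J : Matrix (A₀ × A₁ × B₀ × B₁) (A₀ × A₁ × B₀ × B₁) ℂ) :
    Matrix (A₀ × A₁) (A₀ × A₁) ℂ :=
  fun x y => ∑ b₀ : B₀, ∑ b₁ : B₁, J (x.1, x.2, b₀, b₁) (y.1, y.2, b₀, b₁)

/-- `Tr_{A₁B₁}` of a matrix on `A₀ × A₁ × B₀ × B₁`. -/
def trA1B1 (J : Matrix (A₀ × A₁ × B₀ × B₁) (A₀ × A₁ × B₀ × B₁) ℂ) :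
    Matrix (A₀ × B₀) (A₀ × B₀) ℂ :=
  fun x y => ∑ a₁ : A₁, ∑ b₁ : B₁, J (x.1, a₁, x.2, b₁) (y.1, a₁, y.2, b₁)

/-- `π_{B₀} ⊗ Y`, reindexed to `A₀ × A₁ × B₀` with the subsystems in this order. -/
def piB0 (Y : Matrix (A₀ × A₁) (A₀ × A₁) ℂ) :
    Matrix (A₀ × A₁ × B₀) (A₀ × A₁ × B₀) ℂ :=
  fun x y => ((Fintype.card B₀ : ℂ))⁻¹ * (if x.2.2 = y.2.2 then 1 else 0) *
    Y (x.1, x.2.1) (y.1, y.2.1)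

/-- The non-signalling conditions for a Choi matrix on `A₀ × A₁ × B₀ × B₁`:
`Tr_{A₁} J = π_{A₀} ⊗ Tr_{A₀A₁} J` and `Tr_{B₁} J = π_{B₀} ⊗ Tr_{B₀B₁} J`. -/
def NS (J : Matrix (A₀ × A₁ × B₀ × B₁) (A₀ × A₁ × B₀ × B₁) ℂ) : Prop :=
  trA1 J = piFst (trA0A1 J) ∧ trB1 J = piB0 (trB0B1 J)

/-- The optimal value `Λ(J)` of the SDP whose logarithm is the max-relative entropy of
bidirectional classical communication of the bipartite channel with Choi matrix `J`. -/
def Lam (J : Matrix (A₀ × A₁ × B₀ × B₁) (A₀ × A₁ × B₀ × B₁) ℂ) : ℝ :=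
  sInf {l : ℝ | ∃ Y : Matrix (A₀ × A₁ × B₀ × B₁) (A₀ × A₁ × B₀ × B₁) ℂ,
    LoewnerLE J Y ∧ trA1B1 Y = l • (1 : Matrix (A₀ × B₀) (A₀ × B₀) ℂ) ∧ NS Y}

end FourSystems

section Superchannel

variable {A0 Ab0 Ab1 A1 B0 Bb0 Bb1 B1 : Type*}
  [Fintype A0] [Fintype Ab0] [Fintype Ab1] [Fintype A1]
  [Fintype B0] [Fintype Bb0] [Fintype Bb1] [Fintype B1]
  [DecidableEq A0] [DecidableEq Ab0] [DecidableEq Ab1] [DecidableEq A1]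
  [DecidableEq B0] [DecidableEq Bb0] [DecidableEq Bb1] [DecidableEq B1]

/-- `Tr_{Ā₀ A₁ B̄₀ B₁} J^Θ`, indexed by `A₀ × Ā₁ × B₀ × B̄₁`. -/
def scTP (J : Matrix (A0 × Ab0 × Ab1 × A1 × B0 × Bb0 × Bb1 × B1)
      (A0 × Ab0 × Ab1 × A1 × B0 × Bb0 × Bb1 × B1) ℂ) :
    Matrix (A0 × Ab1 × B0 × Bb1) (A0 × Ab1 × B0 × Bb1) ℂ :=
  fun x y => ∑ ab0 : Ab0, ∑ a1 : A1, ∑ bb0 : Bb0, ∑ b1 : B1,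
    J (x.1, ab0, x.2.1, a1, x.2.2.1, bb0, x.2.2.2, b1)
      (y.1, ab0, y.2.1, a1, y.2.2.1, bb0, y.2.2.2, b1)

/-- `Tr_{Ā₀ A₁} J^Θ`, indexed by `A₀ × Ā₁ × B₀ × B̄₀ × B̄₁ × B₁`. -/
def scTrAb0A1 (J : Matrix (A0 × Ab0 × Ab1 × A1 × B0 × Bb0 × Bb1 × B1)
      (A0 × Ab0 × Ab1 × A1 × B0 × Bb0 × Bb1 × B1) ℂ) :
    Matrix (A0 × Ab1 × B0 × Bb0 × Bb1 × B1) (A0 × Ab1 × B0 × Bb0 × Bb1 × B1) ℂ :=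
  fun x y => ∑ ab0 : Ab0, ∑ a1 : A1,
    J (x.1, ab0, x.2.1, a1, x.2.2) (y.1, ab0, y.2.1, a1, y.2.2)

/-- `Tr_{A₀ Ā₀ A₁} J^Θ`, indexed by `Ā₁ × B₀ × B̄₀ × B̄₁ × B₁`. -/
def scTrA0Ab0A1 (J : Matrix (A0 × Ab0 × Ab1 × A1 × B0 × Bb0 × Bb1 × B1)
      (A0 × Ab0 × Ab1 × A1 × B0 × Bb0 × Bb1 × B1) ℂ) :
    Matrix (Ab1 × B0 × Bb0 × Bb1 × B1) (Ab1 × B0 × Bb0 × Bb1 × B1) ℂ :=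
  fun x y => ∑ a0 : A0, ∑ ab0 : Ab0, ∑ a1 : A1,
    J (a0, ab0, x.1, a1, x.2) (a0, ab0, y.1, a1, y.2)

/-- `Tr_{A₁} J^Θ`, indexed by `A₀ × Ā₀ × Ā₁ × B₀ × B̄₀ × B̄₁ × B₁`. -/
def scTrA1 (J : Matrix (A0 × Ab0 × Ab1 × A1 × B0 × Bb0 × Bb1 × B1)
      (A0 × Ab0 × Ab1 × A1 × B0 × Bb0 × Bb1 × B1) ℂ) :
    Matrix (A0 × Ab0 × Ab1 × B0 × Bb0 × Bb1 × B1)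
      (A0 × Ab0 × Ab1 × B0 × Bb0 × Bb1 × B1) ℂ :=
  fun x y => ∑ a1 : A1,
    J (x.1, x.2.1, x.2.2.1, a1, x.2.2.2) (y.1, y.2.1, y.2.2.1, a1, y.2.2.2)

/-- `Tr_{Ā₁ A₁} J^Θ`, indexed by `A₀ × Ā₀ × B₀ × B̄₀ × B̄₁ × B₁`. -/
def scTrAb1A1 (J : Matrix (A0 × Ab0 × Ab1 × A1 × B0 × Bb0 × Bb1 × B1)
      (A0 × Ab0 × Ab1 × A1 × B0 × Bb0 × Bb1 × B1) ℂ) :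
    Matrix (A0 × Ab0 × B0 × Bb0 × Bb1 × B1) (A0 × Ab0 × B0 × Bb0 × Bb1 × B1) ℂ :=
  fun x y => ∑ ab1 : Ab1, ∑ a1 : A1,
    J (x.1, x.2.1, ab1, a1, x.2.2) (y.1, y.2.1, ab1, a1, y.2.2)

/-- `π_{Ā₁} ⊗ Y` with `π_{Ā₁}` inserted in the third slot of
`A₀ × Ā₀ × Ā₁ × B₀ × B̄₀ × B̄₁ × B₁`. -/
def piAb1 (Y : Matrix (A0 × Ab0 × B0 × Bb0 × Bb1 × B1) (A0 × Ab0 × B0 × Bb0 × Bb1 × B1) ℂ) :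
    Matrix (A0 × Ab0 × Ab1 × B0 × Bb0 × Bb1 × B1)
      (A0 × Ab0 × Ab1 × B0 × Bb0 × Bb1 × B1) ℂ :=
  fun x y => ((Fintype.card Ab1 : ℂ))⁻¹ * (if x.2.2.1 = y.2.2.1 then 1 else 0) *
    Y (x.1, x.2.1, x.2.2.2) (y.1, y.2.1, y.2.2.2)

/-- `Tr_{B̄₀ B₁} J^Θ`, indexed by `A₀ × Ā₀ × Ā₁ × A₁ × B₀ × B̄₁`. -/
def scTrBb0B1 (J : Matrix (A0 × Ab0 × Ab1 × A1 × B0 × Bb0 × Bb1 × B1)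
      (A0 × Ab0 × Ab1 × A1 × B0 × Bb0 × Bb1 × B1) ℂ) :
    Matrix (A0 × Ab0 × Ab1 × A1 × B0 × Bb1) (A0 × Ab0 × Ab1 × A1 × B0 × Bb1) ℂ :=
  fun x y => ∑ bb0 : Bb0, ∑ b1 : B1,
    J (x.1, x.2.1, x.2.2.1, x.2.2.2.1, x.2.2.2.2.1, bb0, x.2.2.2.2.2, b1)
      (y.1, y.2.1, y.2.2.1, y.2.2.2.1, y.2.2.2.2.1, bb0, y.2.2.2.2.2, b1)

/-- `Tr_{B₀ B̄₀ B₁} J^Θ`, indexed by `A₀ × Ā₀ × Ā₁ × A₁ × B̄₁`. -/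
def scTrB0Bb0B1 (J : Matrix (A0 × Ab0 × Ab1 × A1 × B0 × Bb0 × Bb1 × B1)
      (A0 × Ab0 × Ab1 × A1 × B0 × Bb0 × Bb1 × B1) ℂ) :
    Matrix (A0 × Ab0 × Ab1 × A1 × Bb1) (A0 × Ab0 × Ab1 × A1 × Bb1) ℂ :=
  fun x y => ∑ b0 : B0, ∑ bb0 : Bb0, ∑ b1 : B1,
    J (x.1, x.2.1, x.2.2.1, x.2.2.2.1, b0, bb0, x.2.2.2.2, b1)
      (y.1, y.2.1, y.2.2.1, y.2.2.2.1, b0, bb0, y.2.2.2.2, b1)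

/-- `π_{B₀} ⊗ Y` with `π_{B₀}` inserted in the fifth slot of
`A₀ × Ā₀ × Ā₁ × A₁ × B₀ × B̄₁`. -/
def piB0sc (Y : Matrix (A0 × Ab0 × Ab1 × A1 × Bb1) (A0 × Ab0 × Ab1 × A1 × Bb1) ℂ) :
    Matrix (A0 × Ab0 × Ab1 × A1 × B0 × Bb1) (A0 × Ab0 × Ab1 × A1 × B0 × Bb1) ℂ :=
  fun x y => ((Fintype.card B0 : ℂ))⁻¹ * (if x.2.2.2.2.1 = y.2.2.2.2.1 then 1 else 0) *
    Y (x.1, x.2.1, x.2.2.1, x.2.2.2.1, x.2.2.2.2.2) (y.1, y.2.1, y.2.2.1, y.2.2.2.1, y.2.2.2.2.2)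

/-- `Tr_{B₁} J^Θ`, indexed by `A₀ × Ā₀ × Ā₁ × A₁ × B₀ × B̄₀ × B̄₁`. -/
def scTrB1 (J : Matrix (A0 × Ab0 × Ab1 × A1 × B0 × Bb0 × Bb1 × B1)
      (A0 × Ab0 × Ab1 × A1 × B0 × Bb0 × Bb1 × B1) ℂ) :
    Matrix (A0 × Ab0 × Ab1 × A1 × B0 × Bb0 × Bb1)
      (A0 × Ab0 × Ab1 × A1 × B0 × Bb0 × Bb1) ℂ :=
  fun x y => ∑ b1 : B1,
    J (x.1, x.2.1, x.2.2.1, x.2.2.2.1, x.2.2.2.2.1, x.2.2.2.2.2.1, x.2.2.2.2.2.2, b1)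
      (y.1, y.2.1, y.2.2.1, y.2.2.2.1, y.2.2.2.2.1, y.2.2.2.2.2.1, y.2.2.2.2.2.2, b1)

/-- `Tr_{B̄₁ B₁} J^Θ`, indexed by `A₀ × Ā₀ × Ā₁ × A₁ × B₀ × B̄₀`. -/
def scTrBb1B1 (J : Matrix (A0 × Ab0 × Ab1 × A1 × B0 × Bb0 × Bb1 × B1)
      (A0 × Ab0 × Ab1 × A1 × B0 × Bb0 × Bb1 × B1) ℂ) :
    Matrix (A0 × Ab0 × Ab1 × A1 × B0 × Bb0) (A0 × Ab0 × Ab1 × A1 × B0 × Bb0) ℂ :=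
  fun x y => ∑ bb1 : Bb1, ∑ b1 : B1,
    J (x.1, x.2.1, x.2.2.1, x.2.2.2.1, x.2.2.2.2.1, x.2.2.2.2.2, bb1, b1)
      (y.1, y.2.1, y.2.2.1, y.2.2.2.1, y.2.2.2.2.1, y.2.2.2.2.2, bb1, b1)

/-- `π_{B̄₁} ⊗ Y` with `π_{B̄₁}` inserted in the seventh slot of
`A₀ × Ā₀ × Ā₁ × A₁ × B₀ × B̄₀ × B̄₁`. -/
def piBb1sc (Y : Matrix (A0 × Ab0 × Ab1 × A1 × B0 × Bb0) (A0 × Ab0 × Ab1 × A1 × B0 × Bb0) ℂ) :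
    Matrix (A0 × Ab0 × Ab1 × A1 × B0 × Bb0 × Bb1)
      (A0 × Ab0 × Ab1 × A1 × B0 × Bb0 × Bb1) ℂ :=
  fun x y => ((Fintype.card Bb1 : ℂ))⁻¹ * (if x.2.2.2.2.2.2 = y.2.2.2.2.2.2 then 1 else 0) *
    Y (x.1, x.2.1, x.2.2.1, x.2.2.2.1, x.2.2.2.2.1, x.2.2.2.2.2.1)
      (y.1, y.2.1, y.2.2.1, y.2.2.2.1, y.2.2.2.2.1, y.2.2.2.2.2.1)

/-- The link product `J^out(x, x') = ∑_{ȳ, ȳ'} J^Θ(ι(x,ȳ), ι(x',ȳ')) · J^N(ȳ', ȳ)`,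
the Choi matrix of the channel obtained by applying the superchannel with Choi matrix
`J^Θ` to the channel with Choi matrix `J^N`. -/
def linkOut (JΘ : Matrix (A0 × Ab0 × Ab1 × A1 × B0 × Bb0 × Bb1 × B1)
      (A0 × Ab0 × Ab1 × A1 × B0 × Bb0 × Bb1 × B1) ℂ)
    (JN : Matrix (Ab0 × Ab1 × Bb0 × Bb1) (Ab0 × Ab1 × Bb0 × Bb1) ℂ) :
    Matrix (A0 × A1 × B0 × B1) (A0 × A1 × B0 × B1) ℂ :=
  fun x y => ∑ z : Ab0 × Ab1 × Bb0 × Bb1, ∑ w : Ab0 × Ab1 × Bb0 × Bb1,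
    JΘ (x.1, z.1, z.2.1, x.2.1, x.2.2.1, z.2.2.1, z.2.2.2, x.2.2.2)
       (y.1, w.1, w.2.1, y.2.1, y.2.2.1, w.2.2.1, w.2.2.2, y.2.2.2) * JN w z

end Superchannel

/-!
Fix the indices of one party in the link product `J^out`. The resulting block is a sum of local
link products of a block of `J^Θ` with a block of `J^N`. By (iii)–(vi) the blocks of `J^Θ` satisfy
the linear constraints of a one-slot comb, and by non-signalling the blocks of `J^N` have a uniform
input marginal. A comb with slot `R₀ → R₁` turns such an operator into one with a uniform input
marginal again and multiplies traces by `|R₀|⁻¹ |R₁|⁻¹ tr F`. Hence `J^out` is non-signalling, so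
`Tr_{A₁B₁} J^out` is a multiple of the identity, and the multiple is found by comparing traces.
Positivity is the Schur product theorem.
-/

section UniformMarginal

variable {S T ι : Type*} [Fintype S] [Fintype T]

theorem trace_trOut (N : Matrix (S × T) (S × T) ℂ) :
    (trOut N).trace = N.trace :=
  (Fintype.sum_prod_type fun x => N x x).symm

variable [DecidableEq S]

/-- `Tr_T N = tr N • π_S`: the matrix `N` is the Choi matrix of a trace-scaling map from `S` to `T`.
The scale is read off `N` and positivity is not required, so that each non-signalling condition
says that all blocks of the Choi matrix have this property. -/
def HasUniformMarginal (N : Matrix (S × T) (S × T) ℂ) : Prop :=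
  trOut N = ((Fintype.card S : ℂ)⁻¹ * N.trace) • 1

theorem hasUniformMarginal_iff (N : Matrix (S × T) (S × T) ℂ) :
    HasUniformMarginal N ↔ ∀ s s', trOut N s s' =
      (Fintype.card S : ℂ)⁻¹ * (if s = s' then 1 else 0) * ∑ s, ∑ t, N (s, t) (s, t) := by
  simp only [HasUniformMarginal, ← Matrix.ext_iff, Matrix.smul_apply, Matrix.one_apply,
    Matrix.trace, Matrix.diag, Fintype.sum_prod_type, smul_eq_mul, mul_right_comm]

theorem HasUniformMarginal.trOut_apply {N : Matrix (S × T) (S × T) ℂ} (h : HasUniformMarginal N)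
    (s s' : S) :
    trOut N s s' = (Fintype.card S : ℂ)⁻¹ * N.trace * (1 : Matrix S S ℂ) s s' :=
  congrFun₂ h s s'

theorem HasUniformMarginal.of_trOut_eq_smul_one {N : Matrix (S × T) (S × T) ℂ} {c : ℂ}
    (h : trOut N = c • 1) : HasUniformMarginal N := by
  cases isEmpty_or_nonempty S
  · exact Subsingleton.elim _ _
  · rw [HasUniformMarginal, ← trace_trOut, h, Matrix.trace_smul, Matrix.trace_one, smul_eq_mul,
      mul_comm c, inv_mul_cancel_left₀ (Nat.cast_ne_zero.mpr Fintype.card_ne_zero)]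

theorem HasUniformMarginal.sum [Fintype ι] {N : ι → Matrix (S × T) (S × T) ℂ}
    (h : ∀ i, HasUniformMarginal (N i)) : HasUniformMarginal (∑ i, N i) := by
  have trOut_sum : trOut (∑ i, N i) = ∑ i, trOut (N i) := by
    ext s s'
    simp only [trOut, Matrix.sum_apply]
    exact Finset.sum_comm
  refine of_trOut_eq_smul_one (c := ∑ i, (Fintype.card S : ℂ)⁻¹ * (N i).trace) ?_
  rw [trOut_sum, Finset.sum_smul]
  exact Finset.sum_congr rfl fun i _ => h i

end UniformMarginal

section Blocks

variable {S T : Type*}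

/-- The block `⟨t| M |t'⟩` of a bipartite matrix, acting on the first factor. -/
def fstBlock (M : Matrix (S × T) (S × T) ℂ) (t t' : T) : Matrix S S ℂ :=
  M.submatrix (·, t) (·, t')

/-- The block `⟨s| M |s'⟩` of a bipartite matrix, acting on the second factor. -/
def sndBlock (M : Matrix (S × T) (S × T) ℂ) (s s' : S) : Matrix T T ℂ :=
  M.submatrix (s, ·) (s', ·)

theorem trInp_eq_sum_sndBlock [Fintype S] (M : Matrix (S × T) (S × T) ℂ) :
    trInp M = ∑ s, sndBlock M s s := by
  ext t t'
  simp only [trInp, sndBlock, Matrix.sum_apply, Matrix.submatrix_apply]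

theorem trInp_apply_eq_trace_fstBlock [Fintype S] (M : Matrix (S × T) (S × T) ℂ) (t t' : T) :
    trInp M t t' = (fstBlock M t t').trace :=
  rfl

theorem trace_trInp [Fintype S] [Fintype T] (M : Matrix (S × T) (S × T) ℂ) :
    (trInp M).trace = M.trace :=
  (Fintype.sum_prod_type_right fun x => M x x).symm

theorem hasUniformMarginal_trInp {U : Type*} [Fintype S] [Fintype T] [Fintype U] [DecidableEq T]
    {M : Matrix (S × (T × U)) (S × (T × U)) ℂ}
    (h : ∀ s s', HasUniformMarginal (sndBlock M s s')) : HasUniformMarginal (trInp M) := by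
  rw [trInp_eq_sum_sndBlock]
  exact .sum fun s => h s s

end Blocks

section LinkProduct

variable {I K X Y Z W : Type*} [Fintype Z] [Fintype W]

/-- The link product `J ⋆ N` over the system `Z`. The map `e` places the indices of the surviving
system `X` and of the contracted system `Z` in the index type of `J`. -/
def linkProduct (e : X → Z → I) (J : Matrix I I ℂ) (N : Matrix Z Z ℂ) : Matrix X X ℂ :=
  fun x x' => ∑ z, ∑ w, J (e x z) (e x' w) * N w z

theorem posSemidef_linkProduct [Finite X] (e : X → Z → I) {J : Matrix I I ℂ} {N : Matrix Z Z ℂ}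
    (hJ : J.PosSemidef) (hN : N.PosSemidef) :
    (linkProduct e J N).PosSemidef := by
  classical
  have := Fintype.ofFinite X
  -- `J ⋆ N` is a compression of the Hadamard product of `J` and `Nᵀ`, both pulled back to `X × Z`.
  let H : Matrix (X × Z) (X × Z) ℂ :=
    J.submatrix (Function.uncurry e) (Function.uncurry e) ⊙ Nᵀ.submatrix Prod.snd Prod.snd
  let V : Matrix (X × Z) X ℂ := (1 : Matrix X X ℂ).submatrix Prod.fst id
  have hH : H.PosSemidef := (hJ.submatrix _).hadamard (hN.transpose.submatrix _)
  have compression : linkProduct e J N = Vᴴ * H * V := by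
    ext x x'
    simp only [linkProduct, H, V, conjTranspose_submatrix, conjTranspose_one, Matrix.mul_apply,
      submatrix_apply, Matrix.one_apply, id_eq, hadamard_apply, transpose_apply, ite_mul, one_mul,
      zero_mul, mul_ite, mul_one, mul_zero, Fintype.sum_prod_type_right,
      Function.uncurry_apply_pair, Finset.sum_ite_eq, Finset.sum_ite_eq', Finset.mem_univ,
      if_true]
    exact Finset.sum_comm
  rw [compression]
  exact hH.conjTranspose_mul_mul_same V

theorem fstBlock_linkProduct (e : X → Z → I) (f : Y → W → K)
    (J : Matrix (I × K) (I × K) ℂ) (N : Matrix (Z × W) (Z × W) ℂ) (y y' : Y) :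
    fstBlock (linkProduct (fun x z => (e x.1 z.1, f x.2 z.2)) J N) y y' =
      ∑ w, ∑ w', linkProduct e (fstBlock J (f y w) (f y' w')) (fstBlock N w' w) := by
  ext x x'
  simp only [fstBlock, linkProduct, Matrix.submatrix_apply, Matrix.sum_apply,
    Fintype.sum_prod_type_right]
  exact Finset.sum_congr rfl fun w _ => Finset.sum_comm

theorem sndBlock_linkProduct (e : X → Z → I) (f : Y → W → K)
    (J : Matrix (I × K) (I × K) ℂ) (N : Matrix (Z × W) (Z × W) ℂ) (x x' : X) :
    sndBlock (linkProduct (fun x z => (e x.1 z.1, f x.2 z.2)) J N) x x' =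
      ∑ z, ∑ z', linkProduct f (sndBlock J (e x z) (e x' z')) (sndBlock N z' z) := by
  ext y y'
  simp only [sndBlock, linkProduct, Matrix.submatrix_apply, Matrix.sum_apply,
    Fintype.sum_prod_type]
  exact Finset.sum_congr rfl fun z _ => Finset.sum_comm

end LinkProduct

section Comb

variable {S₀ R₀ R₁ S₁ ι : Type*} [Fintype R₀] [Fintype R₁] [Fintype S₁]

/-- The block of `F` on `R₁ × S₁` obtained by fixing the indices of `S₀ × R₀`. -/
def lastToothBlock (F : Matrix (S₀ × R₀ × R₁ × S₁) (S₀ × R₀ × R₁ × S₁) ℂ) (x x' : S₀ × R₀) :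
    Matrix (R₁ × S₁) (R₁ × S₁) ℂ :=
  F.submatrix (fun u => (x.1, x.2, u)) (fun u => (x'.1, x'.2, u))

/-- The block of `F` on `S₀ × R₀ × S₁` obtained by fixing the index of `R₁`. -/
def offSlotBlock (F : Matrix (S₀ × R₀ × R₁ × S₁) (S₀ × R₀ × R₁ × S₁) ℂ) (q q' : R₁) :
    Matrix (S₀ × R₀ × S₁) (S₀ × R₀ × S₁) ℂ :=
  F.submatrix (fun u => (u.1, u.2.1, q, u.2.2)) (fun u => (u.1, u.2.1, q', u.2.2))

theorem sum_trace_lastToothBlock_eq_sum_trOut (F : Matrix (S₀ × R₀ × R₁ × S₁) (S₀ × R₀ × R₁ × S₁) ℂ)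
    (a a' : S₀) :
    ∑ p, (lastToothBlock F (a, p) (a', p)).trace = ∑ q, trOut (offSlotBlock F q q) a a' := by
  simp only [lastToothBlock, offSlotBlock, trOut, Matrix.trace, Matrix.diag,
    Matrix.submatrix_apply, Fintype.sum_prod_type]
  exact Finset.sum_comm

theorem sum_trace_offSlotBlock [Fintype S₀]
    (F : Matrix (S₀ × R₀ × R₁ × S₁) (S₀ × R₀ × R₁ × S₁) ℂ) :
    ∑ q, (offSlotBlock F q q).trace = F.trace := by
  simp only [offSlotBlock, Matrix.trace, Matrix.diag, Matrix.submatrix_apply,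
    Fintype.sum_prod_type]
  rw [Finset.sum_comm]
  exact Finset.sum_congr rfl fun _ _ => Finset.sum_comm

/-- The order `S₀, R₀, R₁, S₁` of the systems of a comb, assembled from the outer systems `S₀, S₁`
and the slot systems `R₀, R₁`. -/
def combIndex (x : S₀ × S₁) (z : R₀ × R₁) : S₀ × R₀ × R₁ × S₁ :=
  (x.1, z.1, z.2, x.2)

theorem trOut_linkProduct_combIndex (F : Matrix (S₀ × R₀ × R₁ × S₁) (S₀ × R₀ × R₁ × S₁) ℂ)
    (N : Matrix (R₀ × R₁) (R₀ × R₁) ℂ) (a a' : S₀) :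
    trOut (linkProduct combIndex F N) a a' =
      ∑ p, ∑ p', (trOut (lastToothBlock F (a, p) (a', p')) * sndBlock N p' p).trace := by
  calc trOut (linkProduct combIndex F N) a a'
      = ∑ z, ∑ w, ∑ r, F (combIndex (a, r) z) (combIndex (a', r) w) * N w z :=
        Finset.sum_comm.trans (Finset.sum_congr rfl fun _ _ => Finset.sum_comm)
    _ = ∑ p, ∑ q, ∑ p', ∑ q',
          trOut (lastToothBlock F (a, p) (a', p')) q q' * sndBlock N p' p q' q := by
        simp only [Fintype.sum_prod_type, ← Finset.sum_mul]
        rfl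
    _ = ∑ p, ∑ p', (trOut (lastToothBlock F (a, p) (a', p')) * sndBlock N p' p).trace :=
        Finset.sum_congr rfl fun _ _ => Finset.sum_comm

variable [Fintype S₀] [DecidableEq S₀] [DecidableEq R₁]

/-- The linear constraints on the Choi matrix of a quantum comb `S₀ → R₀, R₁ → S₁` with one open
slot `R₀ → R₁`: `Tr_{S₁} F = π_{R₁} ⊗ Tr_{R₁S₁} F` and `Tr_{R₀S₁} F = π_{S₀} ⊗ Tr_{S₀R₀S₁} F`.
Positivity is not required, so the blocks of a bipartite comb qualify. -/
structure IsComb (F : Matrix (S₀ × R₀ × R₁ × S₁) (S₀ × R₀ × R₁ × S₁) ℂ) : Prop where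
  uniform_lastTooth : ∀ x x', HasUniformMarginal (lastToothBlock F x x')
  uniform_offSlot : ∀ q q', HasUniformMarginal (offSlotBlock F q q')

theorem IsComb.sum [Fintype ι] {F : ι → Matrix (S₀ × R₀ × R₁ × S₁) (S₀ × R₀ × R₁ × S₁) ℂ}
    (h : ∀ i, IsComb (F i)) : IsComb (∑ i, F i) where
  uniform_lastTooth x x' := by
    convert HasUniformMarginal.sum fun i => (h i).uniform_lastTooth x x'
    ext
    simp only [lastToothBlock, Matrix.submatrix_apply, Matrix.sum_apply]
  uniform_offSlot q q' := by
    convert HasUniformMarginal.sum fun i => (h i).uniform_offSlot q q'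
    ext
    simp only [offSlotBlock, Matrix.submatrix_apply, Matrix.sum_apply]

variable {F : Matrix (S₀ × R₀ × R₁ × S₁) (S₀ × R₀ × R₁ × S₁) ℂ} {N : Matrix (R₀ × R₁) (R₀ × R₁) ℂ}

theorem IsComb.sum_trace_lastToothBlock (hF : IsComb F) (a a' : S₀) :
    ∑ p, (lastToothBlock F (a, p) (a', p)).trace =
      (Fintype.card S₀ : ℂ)⁻¹ * F.trace * (1 : Matrix S₀ S₀ ℂ) a a' := by
  simp only [sum_trace_lastToothBlock_eq_sum_trOut, (hF.uniform_offSlot _ _).trOut_apply,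
    ← Finset.sum_mul, ← Finset.mul_sum, sum_trace_offSlotBlock]

variable [DecidableEq R₀]

/-- Discarding `S₁` makes the comb discard `R₁`; it then meets only the marginal of `N` on `R₀`,
which is uniform, so it discards `R₀` as well. -/
theorem IsComb.trOut_linkProduct (hF : IsComb F) (hN : HasUniformMarginal N) :
    trOut (linkProduct combIndex F N) =
      ((Fintype.card S₀ : ℂ)⁻¹ * ((Fintype.card R₀ : ℂ)⁻¹ * (Fintype.card R₁ : ℂ)⁻¹ *
        (F.trace * N.trace))) • 1 := by
  ext a a'
  have trace_tooth (p p' : R₀) :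
      (trOut (lastToothBlock F (a, p) (a', p')) * sndBlock N p' p).trace =
        (Fintype.card R₁ : ℂ)⁻¹ * (lastToothBlock F (a, p) (a', p')).trace * trOut N p' p := by
    rw [hF.uniform_lastTooth, Matrix.smul_mul, Matrix.one_mul, Matrix.trace_smul, smul_eq_mul]
    rfl
  calc trOut (linkProduct combIndex F N) a a'
      = ∑ p, ∑ p', (Fintype.card R₁ : ℂ)⁻¹ * (lastToothBlock F (a, p) (a', p')).trace *
          trOut N p' p := by simp only [trOut_linkProduct_combIndex, trace_tooth]
    _ = (Fintype.card R₁ : ℂ)⁻¹ * (∑ p, (lastToothBlock F (a, p) (a', p)).trace) *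
          ((Fintype.card R₀ : ℂ)⁻¹ * N.trace) := by
        simp only [hN.trOut_apply, Matrix.one_apply, mul_ite, mul_one, mul_zero,
          Finset.sum_ite_eq', Finset.mem_univ, if_true, Finset.mul_sum, Finset.sum_mul]
    _ = _ := by
        rw [hF.sum_trace_lastToothBlock, Matrix.smul_apply, smul_eq_mul]
        ring

theorem IsComb.hasUniformMarginal_linkProduct (hF : IsComb F) (hN : HasUniformMarginal N) :
    HasUniformMarginal (linkProduct combIndex F N) :=
  .of_trOut_eq_smul_one (hF.trOut_linkProduct hN)

theorem IsComb.trace_linkProduct [Nonempty S₀] (hF : IsComb F) (hN : HasUniformMarginal N) :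
    (linkProduct combIndex F N).trace =
      (Fintype.card R₀ : ℂ)⁻¹ * (Fintype.card R₁ : ℂ)⁻¹ * (F.trace * N.trace) := by
  rw [← trace_trOut, hF.trOut_linkProduct hN, Matrix.trace_smul, Matrix.trace_one, smul_eq_mul,
    mul_right_comm, inv_mul_cancel₀ (Nat.cast_ne_zero.mpr Fintype.card_ne_zero), one_mul]

end Comb

section Grouping

variable {S₀ S₁ T₀ T₁ : Type*} [Fintype S₀] [Fintype S₁] [Fintype T₀] [Fintype T₁]

/-- A matrix on `S₀ × S₁ × T₀ × T₁` viewed as a bipartite matrix between the parties holding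
`S₀ × S₁` and `T₀ × T₁`. -/
def groupParties (J : Matrix (S₀ × S₁ × T₀ × T₁) (S₀ × S₁ × T₀ × T₁) ℂ) :
    Matrix ((S₀ × S₁) × (T₀ × T₁)) ((S₀ × S₁) × (T₀ × T₁)) ℂ :=
  J.submatrix (Equiv.prodAssoc _ _ _) (Equiv.prodAssoc _ _ _)

theorem trace_groupParties (J : Matrix (S₀ × S₁ × T₀ × T₁) (S₀ × S₁ × T₀ × T₁) ℂ) :
    (groupParties J).trace = J.trace :=
  (Equiv.prodAssoc S₀ S₁ (T₀ × T₁)).sum_comp fun x => J x x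

theorem trace_trA1B1 (J : Matrix (S₀ × S₁ × T₀ × T₁) (S₀ × S₁ × T₀ × T₁) ℂ) :
    (trA1B1 J).trace = J.trace := by
  simp only [Matrix.trace, Matrix.diag, trA1B1, Fintype.sum_prod_type]
  exact Finset.sum_congr rfl fun _ _ => Finset.sum_comm

variable [DecidableEq S₀] [DecidableEq T₀]

theorem trace_of_trA1B1_eq_one {J : Matrix (S₀ × S₁ × T₀ × T₁) (S₀ × S₁ × T₀ × T₁) ℂ}
    (h : trA1B1 J = 1) : J.trace = Fintype.card S₀ * Fintype.card T₀ := by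
  rw [← trace_trA1B1, h, Matrix.trace_one, Fintype.card_prod, Nat.cast_mul]

theorem ns_iff (J : Matrix (S₀ × S₁ × T₀ × T₁) (S₀ × S₁ × T₀ × T₁) ℂ) :
    NS J ↔ (∀ t t', HasUniformMarginal (fstBlock (groupParties J) t t')) ∧
      ∀ s s', HasUniformMarginal (sndBlock (groupParties J) s s') := by
  simp only [hasUniformMarginal_iff]
  refine and_congr ⟨fun h t t' s s' => congrFun₂ h (s, t) (s', t'), fun h => ?_⟩
    ⟨fun h s s' t t' => congrFun₂ h (s.1, s.2, t) (s'.1, s'.2, t'), fun h => ?_⟩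
  · ext x x'
    exact h x.2 x'.2 x.1 x'.1
  · ext x x'
    exact h (x.1, x.2.1) (x'.1, x'.2.1) x.2.2 x'.2.2

theorem trA1B1_eq_smul_one_of_ns {J : Matrix (S₀ × S₁ × T₀ × T₁) (S₀ × S₁ × T₀ × T₁) ℂ}
    (h : NS J) :
    trA1B1 J = ((Fintype.card S₀ : ℂ)⁻¹ * (Fintype.card T₀ : ℂ)⁻¹ * J.trace) • 1 := by
  obtain ⟨hfst, hsnd⟩ := (ns_iff J).mp h
  set M := groupParties J
  ext ⟨a, b⟩ ⟨a', b'⟩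
  calc trA1B1 J (a, b) (a', b')
      = ∑ t, trOut (fstBlock M (b, t) (b', t)) a a' := Finset.sum_comm
    _ = (Fintype.card S₀ : ℂ)⁻¹ * trOut (trInp M) b b' * (1 : Matrix S₀ S₀ ℂ) a a' := by
        simp only [(hfst _ _).trOut_apply, ← trInp_apply_eq_trace_fstBlock, ← Finset.sum_mul,
          ← Finset.mul_sum]
        rfl
    _ = (Fintype.card S₀ : ℂ)⁻¹ * (Fintype.card T₀ : ℂ)⁻¹ * J.trace *
          ((1 : Matrix S₀ S₀ ℂ) a a' * (1 : Matrix T₀ T₀ ℂ) b b') := by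
        rw [(hasUniformMarginal_trInp hsnd).trOut_apply, trace_trInp, trace_groupParties]
        ring
    _ = _ := by
        rw [Matrix.smul_apply, smul_eq_mul, ← Matrix.one_kronecker_one, Matrix.kronecker_apply]

end Grouping

section BipartiteComb

variable {S₀ R₀ R₁ S₁ K Y W : Type*} [Fintype S₀] [Fintype R₀] [Fintype R₁] [Fintype S₁]
  [Fintype W] [DecidableEq S₀] [DecidableEq R₀] [DecidableEq R₁]

theorem hasUniformMarginal_fstBlock_linkProduct
    {Θ : Matrix ((S₀ × R₀ × R₁ × S₁) × K) ((S₀ × R₀ × R₁ × S₁) × K) ℂ}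
    {N : Matrix ((R₀ × R₁) × W) ((R₀ × R₁) × W) ℂ} (f : Y → W → K)
    (hΘ : ∀ k k', IsComb (fstBlock Θ k k')) (hN : ∀ w w', HasUniformMarginal (fstBlock N w w'))
    (y y' : Y) :
    HasUniformMarginal
      (fstBlock (linkProduct (fun x z => (combIndex x.1 z.1, f x.2 z.2)) Θ N) y y') := by
  rw [fstBlock_linkProduct]
  exact .sum fun w => .sum fun w' => (hΘ _ _).hasUniformMarginal_linkProduct (hN _ _)

theorem hasUniformMarginal_sndBlock_linkProduct
    {Θ : Matrix (K × (S₀ × R₀ × R₁ × S₁)) (K × (S₀ × R₀ × R₁ × S₁)) ℂ}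
    {N : Matrix (W × (R₀ × R₁)) (W × (R₀ × R₁)) ℂ} (f : Y → W → K)
    (hΘ : ∀ k k', IsComb (sndBlock Θ k k')) (hN : ∀ w w', HasUniformMarginal (sndBlock N w w'))
    (y y' : Y) :
    HasUniformMarginal
      (sndBlock (linkProduct (fun x z => (f x.1 z.1, combIndex x.2 z.2)) Θ N) y y') := by
  rw [sndBlock_linkProduct]
  exact .sum fun w => .sum fun w' => (hΘ _ _).hasUniformMarginal_linkProduct (hN _ _)

theorem trInp_linkProduct_of_isComb [Nonempty S₀]
    {Θ : Matrix ((S₀ × R₀ × R₁ × S₁) × K) ((S₀ × R₀ × R₁ × S₁) × K) ℂ}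
    {N : Matrix ((R₀ × R₁) × W) ((R₀ × R₁) × W) ℂ} (f : Y → W → K)
    (hΘ : ∀ k k', IsComb (fstBlock Θ k k')) (hN : ∀ w w', HasUniformMarginal (fstBlock N w w')) :
    trInp (linkProduct (fun x z => (combIndex x.1 z.1, f x.2 z.2)) Θ N) =
      ((Fintype.card R₀ : ℂ)⁻¹ * (Fintype.card R₁ : ℂ)⁻¹) •
        linkProduct f (trInp Θ) (trInp N) := by
  ext y y'
  simp only [trInp_apply_eq_trace_fstBlock, fstBlock_linkProduct, Matrix.trace_sum,
    (hΘ _ _).trace_linkProduct (hN _ _), ← Finset.mul_sum, Matrix.smul_apply, smul_eq_mul]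
  rfl

end BipartiteComb

section Superchannel

variable {A0 Ab0 Ab1 A1 B0 Bb0 Bb1 B1 : Type*}

/-- The Choi matrix of a bipartite superchannel viewed as a bipartite matrix between Alice's comb
systems and Bob's comb systems. -/
def groupCombs (J : Matrix (A0 × Ab0 × Ab1 × A1 × B0 × Bb0 × Bb1 × B1)
      (A0 × Ab0 × Ab1 × A1 × B0 × Bb0 × Bb1 × B1) ℂ) :
    Matrix ((A0 × Ab0 × Ab1 × A1) × (B0 × Bb0 × Bb1 × B1))
      ((A0 × Ab0 × Ab1 × A1) × (B0 × Bb0 × Bb1 × B1)) ℂ :=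
  J.submatrix (fun x => (x.1.1, x.1.2.1, x.1.2.2.1, x.1.2.2.2, x.2))
    (fun x => (x.1.1, x.1.2.1, x.1.2.2.1, x.1.2.2.2, x.2))

variable {JΘ : Matrix (A0 × Ab0 × Ab1 × A1 × B0 × Bb0 × Bb1 × B1)
    (A0 × Ab0 × Ab1 × A1 × B0 × Bb0 × Bb1 × B1) ℂ}
  {JN : Matrix (Ab0 × Ab1 × Bb0 × Bb1) (Ab0 × Ab1 × Bb0 × Bb1) ℂ}

theorem isComb_fstBlock_groupCombs [Fintype A0] [Fintype Ab0] [Fintype Ab1] [Fintype A1]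
    [DecidableEq A0] [DecidableEq Ab1] (h₀ : scTrAb0A1 JΘ = piFst (scTrA0Ab0A1 JΘ))
    (h₁ : scTrA1 JΘ = piAb1 (scTrAb1A1 JΘ)) (y y' : B0 × Bb0 × Bb1 × B1) :
    IsComb (fstBlock (groupCombs JΘ) y y') where
  uniform_lastTooth x x' := (hasUniformMarginal_iff _).mpr fun q q' =>
    congrFun₂ h₁ (x.1, x.2, q, y) (x'.1, x'.2, q', y')
  uniform_offSlot q q' := (hasUniformMarginal_iff _).mpr fun a a' => by
    simp only [trOut, Fintype.sum_prod_type]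
    exact congrFun₂ h₀ (a, q, y) (a', q', y')

theorem isComb_sndBlock_groupCombs [Fintype B0] [Fintype Bb0] [Fintype Bb1] [Fintype B1]
    [DecidableEq B0] [DecidableEq Bb1] (h₀ : scTrBb0B1 JΘ = piB0sc (scTrB0Bb0B1 JΘ))
    (h₁ : scTrB1 JΘ = piBb1sc (scTrBb1B1 JΘ)) (x x' : A0 × Ab0 × Ab1 × A1) :
    IsComb (sndBlock (groupCombs JΘ) x x') where
  uniform_lastTooth y y' := (hasUniformMarginal_iff _).mpr fun q q' =>
    congrFun₂ h₁ (x.1, x.2.1, x.2.2.1, x.2.2.2, y.1, y.2, q)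
      (x'.1, x'.2.1, x'.2.2.1, x'.2.2.2, y'.1, y'.2, q')
  uniform_offSlot q q' := (hasUniformMarginal_iff _).mpr fun b b' => by
    simp only [trOut, Fintype.sum_prod_type]
    exact congrFun₂ h₀ (x.1, x.2.1, x.2.2.1, x.2.2.2, b, q)
      (x'.1, x'.2.1, x'.2.2.1, x'.2.2.2, b', q')

variable [Fintype Ab0] [Fintype Ab1] [Fintype Bb0] [Fintype Bb1]

theorem posSemidef_linkOut [Finite A0] [Finite A1] [Finite B0] [Finite B1] (hΘ : JΘ.PosSemidef)
    (hN : JN.PosSemidef) : (linkOut JΘ JN).PosSemidef := by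
  let e (x : A0 × A1 × B0 × B1) (z : Ab0 × Ab1 × Bb0 × Bb1) :
      A0 × Ab0 × Ab1 × A1 × B0 × Bb0 × Bb1 × B1 :=
    (x.1, z.1, z.2.1, x.2.1, x.2.2.1, z.2.2.1, z.2.2.2, x.2.2.2)
  have linkOut_eq : linkOut JΘ JN = linkProduct e JΘ JN := rfl
  rw [linkOut_eq]
  exact posSemidef_linkProduct e hΘ hN

theorem groupParties_linkOut :
    groupParties (linkOut JΘ JN) =
      linkProduct (fun x z => (combIndex x.1 z.1, combIndex x.2 z.2)) (groupCombs JΘ)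
        (groupParties JN) := by
  ext x x'
  let assoc := Equiv.prodAssoc Ab0 Ab1 (Bb0 × Bb1)
  let summand (z w : Ab0 × Ab1 × Bb0 × Bb1) : ℂ :=
    JΘ (x.1.1, z.1, z.2.1, x.1.2, x.2.1, z.2.2.1, z.2.2.2, x.2.2)
      (x'.1.1, w.1, w.2.1, x'.1.2, x'.2.1, w.2.2.1, w.2.2.2, x'.2.2) * JN w z
  calc ∑ z, ∑ w, summand z w
      = ∑ z, ∑ w, summand (assoc z) w := (assoc.sum_comp _).symm
    _ = ∑ z, ∑ w, summand (assoc z) (assoc w) :=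
        Finset.sum_congr rfl fun _ _ => (assoc.sum_comp _).symm

variable [Fintype A0] [Fintype A1] [Fintype B0] [Fintype B1]

theorem trace_scTP : (scTP JΘ).trace = (groupCombs JΘ).trace := by
  let reorder : (A0 × Ab1 × B0 × Bb1) × (Ab0 × A1 × Bb0 × B1) ≃
      (A0 × Ab0 × Ab1 × A1) × (B0 × Bb0 × Bb1 × B1) :=
    { toFun := fun ⟨⟨a, q, b, s⟩, ⟨p, c, r, d⟩⟩ => ⟨⟨a, p, q, c⟩, ⟨b, r, s, d⟩⟩
      invFun := fun ⟨⟨a, p, q, c⟩, ⟨b, r, s, d⟩⟩ => ⟨⟨a, q, b, s⟩, ⟨p, c, r, d⟩⟩ }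
  calc (scTP JΘ).trace
      = ∑ x, ∑ u, groupCombs JΘ (reorder (x, u)) (reorder (x, u)) := by
        simp only [Matrix.trace, Matrix.diag, scTP, Fintype.sum_prod_type]
        rfl
    _ = ∑ v, groupCombs JΘ (reorder v) (reorder v) :=
        (Fintype.sum_prod_type fun v => groupCombs JΘ (reorder v) (reorder v)).symm
    _ = (groupCombs JΘ).trace := reorder.sum_comp fun v => groupCombs JΘ v v

variable [DecidableEq A0] [DecidableEq Ab1] [DecidableEq B0] [DecidableEq Bb1]

theorem trace_groupCombs_of_scTP_eq_one (h : scTP JΘ = 1) :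
    (groupCombs JΘ).trace =
      Fintype.card A0 * (Fintype.card Ab1 * (Fintype.card B0 * Fintype.card Bb1)) := by
  rw [← trace_scTP, h, Matrix.trace_one]
  simp only [Fintype.card_prod, Nat.cast_mul]

variable [DecidableEq Ab0] [DecidableEq Bb0]

theorem ns_linkOut (hA : ∀ y y', IsComb (fstBlock (groupCombs JΘ) y y'))
    (hB : ∀ x x', IsComb (sndBlock (groupCombs JΘ) x x')) (hN : NS JN) :
    NS (linkOut JΘ JN) := by
  obtain ⟨hNA, hNB⟩ := (ns_iff JN).mp hN
  rw [ns_iff, groupParties_linkOut]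
  exact ⟨hasUniformMarginal_fstBlock_linkProduct combIndex hA hNA,
    hasUniformMarginal_sndBlock_linkProduct combIndex hB hNB⟩

theorem trace_linkOut [Nonempty A0] [Nonempty B0]
    (hA : ∀ y y', IsComb (fstBlock (groupCombs JΘ) y y'))
    (hB : ∀ x x', IsComb (sndBlock (groupCombs JΘ) x x')) (hN : NS JN) :
    (linkOut JΘ JN).trace =
      (Fintype.card Ab0 : ℂ)⁻¹ * (Fintype.card Ab1 : ℂ)⁻¹ *
        ((Fintype.card Bb0 : ℂ)⁻¹ * (Fintype.card Bb1 : ℂ)⁻¹ *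
          ((groupCombs JΘ).trace * JN.trace)) := by
  obtain ⟨hNA, hNB⟩ := (ns_iff JN).mp hN
  have hΘB : IsComb (trInp (groupCombs JΘ)) := by
    rw [trInp_eq_sum_sndBlock]
    exact .sum fun x => hB x x
  rw [← trace_groupParties, groupParties_linkOut, ← trace_trInp,
    trInp_linkProduct_of_isComb combIndex hA hNA, Matrix.trace_smul, smul_eq_mul,
    hΘB.trace_linkProduct (hasUniformMarginal_trInp hNB), trace_trInp, trace_trInp,
    trace_groupParties]

end Superchannel

/-- Non-signalling bipartite superchannels preserve non-signalling channels
(Choi/link-product form): if `J^Θ` satisfies the Choi-matrix conditions (i)–(vi) of a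
non-signalling bipartite superchannel and `J^N` is the Choi matrix of a non-signalling
bipartite channel, then the link product `J^out` is the Choi matrix of a non-signalling
bipartite channel. -/
theorem ns_superchannel_preserves_ns
    {A0 Ab0 Ab1 A1 B0 Bb0 Bb1 B1 : Type*}
    [Fintype A0] [Fintype Ab0] [Fintype Ab1] [Fintype A1]
    [Fintype B0] [Fintype Bb0] [Fintype Bb1] [Fintype B1]
    [DecidableEq A0] [DecidableEq Ab0] [DecidableEq Ab1] [DecidableEq A1]
    [DecidableEq B0] [DecidableEq Bb0] [DecidableEq Bb1] [DecidableEq B1]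
    [Nonempty A0] [Nonempty Ab0] [Nonempty Ab1] [Nonempty A1]
    [Nonempty B0] [Nonempty Bb0] [Nonempty Bb1] [Nonempty B1]
    (JΘ : Matrix (A0 × Ab0 × Ab1 × A1 × B0 × Bb0 × Bb1 × B1)
      (A0 × Ab0 × Ab1 × A1 × B0 × Bb0 × Bb1 × B1) ℂ)
    (JN : Matrix (Ab0 × Ab1 × Bb0 × Bb1) (Ab0 × Ab1 × Bb0 × Bb1) ℂ)
    (hΘ₁ : JΘ.PosSemidef)
    (hΘ₂ : scTP JΘ = 1)
    (hΘ₃ : scTrAb0A1 JΘ = piFst (scTrA0Ab0A1 JΘ))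
    (hΘ₄ : scTrA1 JΘ = piAb1 (scTrAb1A1 JΘ))
    (hΘ₅ : scTrBb0B1 JΘ = piB0sc (scTrB0Bb0B1 JΘ))
    (hΘ₆ : scTrB1 JΘ = piBb1sc (scTrBb1B1 JΘ))
    (hN₁ : JN.PosSemidef) (hN₂ : trA1B1 JN = 1) (hN₃ : NS JN) :
    (linkOut JΘ JN).PosSemidef ∧ trA1B1 (linkOut JΘ JN) = 1 ∧ NS (linkOut JΘ JN) := by
  have hA := isComb_fstBlock_groupCombs hΘ₃ hΘ₄
  have hB := isComb_sndBlock_groupCombs hΘ₅ hΘ₆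
  have hNS : NS (linkOut JΘ JN) := ns_linkOut hA hB hN₃
  refine ⟨posSemidef_linkOut hΘ₁ hN₁, ?_, hNS⟩
  rw [trA1B1_eq_smul_one_of_ns hNS, trace_linkOut hA hB hN₃, trace_groupCombs_of_scTP_eq_one hΘ₂,
    trace_of_trA1B1_eq_one hN₂]
  convert one_smul ℂ _
  field_simp
end
end

section
/- Weak duality for the SDP of the max-relative entropy of bidirectional classical communication: let J, indexed by A₀ × A₁ × B₀ × B₁, be positive semidefinite. Suppose (λ, Y) is primal feasible: J ≤ Y, Tr_{A₁B₁} Y = λ • I_{A₀B₀}, Tr_{A₁} Y = π_{A₀} ⊗ Tr_{A₀A₁} Y, Tr_{B₁} Y = π_{B₀} ⊗ Tr_{B₀B₁} Y. Suppose (M, N, P, Q) is dual feasible: M indexed by A₀ × A₁ × B₀ × B₁ is positive semidefinite, N indexed by A₀ × B₀ is Hermitian with trace 1, P indexed by A₀ × B₀ × B₁ is Hermitian with Tr_{A₀} P = 0, Q indexed by A₀ × A₁ × B₀ is Hermitian with Tr_{B₀} Q = 0, and M ≤ N ⊗ I_{A₁B₁} + P ⊗ I_{A₁} + Q ⊗ I_{B₁}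 (with the natural reindexings). Then Re (Matrix.trace (M * J)) ≤ λ. -/
open Matrix
open scoped ComplexOrder

noncomputable section

section WeakDuality

variable {A₀ A₁ B₀ B₁ : Type*} [Fintype A₀] [Fintype A₁] [Fintype B₀] [Fintype B₁]
  [DecidableEq A₀] [DecidableEq A₁] [DecidableEq B₀] [DecidableEq B₁]

/-- `N ⊗ I_{A₁B₁}` reindexed to `A₀ × A₁ × B₀ × B₁`. -/
def embedN (N : Matrix (A₀ × B₀) (A₀ × B₀) ℂ) :
    Matrix (A₀ × A₁ × B₀ × B₁) (A₀ × A₁ × B₀ × B₁) ℂ :=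
  fun x y => N (x.1, x.2.2.1) (y.1, y.2.2.1) *
    (if x.2.1 = y.2.1 ∧ x.2.2.2 = y.2.2.2 then 1 else 0)

/-- `P ⊗ I_{A₁}` reindexed to `A₀ × A₁ × B₀ × B₁`. -/
def embedP (P : Matrix (A₀ × B₀ × B₁) (A₀ × B₀ × B₁) ℂ) :
    Matrix (A₀ × A₁ × B₀ × B₁) (A₀ × A₁ × B₀ × B₁) ℂ :=
  fun x y => P (x.1, x.2.2.1, x.2.2.2) (y.1, y.2.2.1, y.2.2.2) *
    (if x.2.1 = y.2.1 then 1 else 0)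

/-- `Q ⊗ I_{B₁}` reindexed to `A₀ × A₁ × B₀ × B₁`. -/
def embedQ (Q : Matrix (A₀ × A₁ × B₀) (A₀ × A₁ × B₀) ℂ) :
    Matrix (A₀ × A₁ × B₀ × B₁) (A₀ × A₁ × B₀ × B₁) ℂ :=
  fun x y => Q (x.1, x.2.1, x.2.2.1) (y.1, y.2.1, y.2.2.1) *
    (if x.2.2.2 = y.2.2.2 then 1 else 0)

/-- `Tr_{B₀}` of a matrix on `A₀ × A₁ × B₀`. -/
def trB0Last (Q : Matrix (A₀ × A₁ × B₀) (A₀ × A₁ × B₀) ℂ) :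
    Matrix (A₀ × A₁) (A₀ × A₁) ℂ :=
  fun u v => ∑ b : B₀, Q (u.1, u.2, b) (v.1, v.2, b)

end WeakDuality

/-!
Since `M ≤ N ⊗ I + P ⊗ I + Q ⊗ I` and `0 ≤ J ≤ Y`, pairing positive semidefinite matrices under
the trace gives `Tr (M J) ≤ Tr ((N ⊗ I + P ⊗ I + Q ⊗ I) Y)`. Tensoring with an identity is adjoint
to the partial trace, so the `N` term is `Tr (N Tr_{A₁B₁} Y) = λ Tr N`. In the `P` term,
`Tr_{A₁} Y` is `π_{A₀} ⊗ Tr_{A₀A₁} Y`, so the same adjunction leaves a multiple of a pairing with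
`Tr_{A₀} P = 0`; the `Q` term vanishes likewise.
-/

open scoped Kronecker

section TraceReindex

variable {m n R : Type*} [Fintype m] [Fintype n]

theorem trace_submatrix_equiv [AddCommMonoid R] (e : m ≃ n) (A : Matrix n n R) :
    trace (A.submatrix e e) = trace A :=
  e.sum_comp fun i => A i i

theorem trace_submatrix_equiv_mul [AddCommMonoid R] [Mul R] (e : m ≃ n)
    (A : Matrix n n R) (B : Matrix m m R) :
    trace (A.submatrix e e * B) = trace (A * B.submatrix e.symm e.symm) := by
  rw [← trace_submatrix_equiv e (A * _), ← submatrix_mul_equiv _ _ e e e]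
  simp

end TraceReindex

open scoped MatrixOrder in
theorem trace_mul_nonneg_of_posSemidef {n 𝕜 : Type*} [Fintype n] [RCLike 𝕜]
    {A B : Matrix n n 𝕜} (hA : A.PosSemidef) (hB : B.PosSemidef) :
    0 ≤ trace (A * B) := by
  classical
  obtain ⟨C, rfl⟩ := CStarAlgebra.nonneg_iff_eq_star_mul_self.mp hA.nonneg
  rw [star_eq_conjTranspose, ← trace_mul_cycle]
  exact (hB.mul_mul_conjTranspose_same C).trace_nonneg

section LoewnerLE

variable {n : Type*} [Fintype n] {A B C D : Matrix n n ℂ}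

theorem LoewnerLE.posSemidef (hAB : LoewnerLE A B) (hA : A.PosSemidef) : B.PosSemidef := by
  simpa using hA.add hAB

theorem LoewnerLE.trace_mul_le (hAB : LoewnerLE A B) (hCD : LoewnerLE C D)
    (hA : A.PosSemidef) (hD : D.PosSemidef) : trace (A * C) ≤ trace (B * D) :=
  calc
    trace (A * C) ≤ trace (A * D) := by
      simpa [Matrix.mul_sub] using trace_mul_nonneg_of_posSemidef hA hCD
    _ ≤ trace (B * D) := by
      simpa [Matrix.sub_mul] using trace_mul_nonneg_of_posSemidef hAB hD

end LoewnerLE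

section PartialTrace

variable {S T : Type*} [Fintype S]

theorem piFst_eq_smul_kronecker [DecidableEq S] (Z : Matrix T T ℂ) :
    piFst (S := S) Z = (Fintype.card S : ℂ)⁻¹ • ((1 : Matrix S S ℂ) ⊗ₖ Z) := by
  ext x y
  simp [piFst, one_apply]

variable [Fintype T]

theorem trace_kronecker_one_mul [DecidableEq T] (Z : Matrix S S ℂ)
    (X : Matrix (S × T) (S × T) ℂ) :
    trace ((Z ⊗ₖ (1 : Matrix T T ℂ)) * X) = trace (Z * trOut X) := by
  simp only [trace, diag, mul_apply, kronecker_apply, one_apply, trOut, Fintype.sum_prod_type,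
    Finset.mul_sum, mul_ite, ite_mul, mul_one, mul_zero, zero_mul, Finset.sum_ite_eq,
    Finset.mem_univ, if_true]
  exact Finset.sum_congr rfl fun s _ => Finset.sum_comm

theorem trace_one_kronecker_mul [DecidableEq S] (Z : Matrix T T ℂ)
    (X : Matrix (S × T) (S × T) ℂ) :
    trace (((1 : Matrix S S ℂ) ⊗ₖ Z) * X) = trace (Z * trInp X) := by
  have swap : (1 : Matrix S S ℂ) ⊗ₖ Z =
      (Z ⊗ₖ (1 : Matrix S S ℂ)).submatrix (Equiv.prodComm S T) (Equiv.prodComm S T) := by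
    ext x y
    simp [one_apply, mul_comm]
  rw [swap, trace_submatrix_equiv_mul, trace_kronecker_one_mul]
  rfl

theorem trace_piFst_mul [DecidableEq S] (Z : Matrix T T ℂ) (X : Matrix (S × T) (S × T) ℂ) :
    trace (piFst Z * X) = (Fintype.card S : ℂ)⁻¹ * trace (Z * trInp X) := by
  rw [piFst_eq_smul_kronecker, smul_mul, trace_smul, trace_one_kronecker_mul, smul_eq_mul]

end PartialTrace

section FourSystems

variable {A₀ A₁ B₀ B₁ : Type*}

/-- The regrouping `A₀A₁B₀B₁ ≃ (A₀B₀)(A₁B₁)`, separating inputs from outputs; it turns `embedN` and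
`trA1B1` into operations on the second factor of a bipartite system. -/
def splitA1B1 : A₀ × A₁ × B₀ × B₁ ≃ (A₀ × B₀) × (A₁ × B₁) where
  toFun x := ((x.1, x.2.2.1), (x.2.1, x.2.2.2))
  invFun x := (x.1.1, x.2.1, x.1.2, x.2.2)

/-- The regrouping `A₀A₁B₀B₁ ≃ (A₀B₀B₁)A₁`, which turns `embedP` and `trA1` into operations on the
second factor of a bipartite system. -/
def splitA1 : A₀ × A₁ × B₀ × B₁ ≃ (A₀ × B₀ × B₁) × A₁ where
  toFun x := ((x.1, x.2.2), x.2.1)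
  invFun x := (x.1.1, x.2, x.1.2)

/-- The regrouping `A₀A₁B₀B₁ ≃ (A₀A₁B₀)B₁`, which turns `embedQ` and `trB1` into operations on the
second factor of a bipartite system. -/
def splitB1 : A₀ × A₁ × B₀ × B₁ ≃ (A₀ × A₁ × B₀) × B₁ where
  toFun x := ((x.1, x.2.1, x.2.2.1), x.2.2.2)
  invFun x := (x.1.1, x.1.2.1, x.1.2.2, x.2)

theorem embedN_eq_submatrix [DecidableEq A₁] [DecidableEq B₁]
    (N : Matrix (A₀ × B₀) (A₀ × B₀) ℂ) :
    embedN N = (N ⊗ₖ (1 : Matrix (A₁ × B₁) (A₁ × B₁) ℂ)).submatrix splitA1B1 splitA1B1 := by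
  ext x y
  simp [embedN, splitA1B1, one_apply]

theorem embedP_eq_submatrix [DecidableEq A₁] (P : Matrix (A₀ × B₀ × B₁) (A₀ × B₀ × B₁) ℂ) :
    embedP P = (P ⊗ₖ (1 : Matrix A₁ A₁ ℂ)).submatrix splitA1 splitA1 := by
  ext x y
  simp [embedP, splitA1, one_apply]

theorem embedQ_eq_submatrix [DecidableEq B₁] (Q : Matrix (A₀ × A₁ × B₀) (A₀ × A₁ × B₀) ℂ) :
    embedQ Q = (Q ⊗ₖ (1 : Matrix B₁ B₁ ℂ)).submatrix splitB1 splitB1 := by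
  ext x y
  simp [embedQ, splitB1, one_apply]

theorem piB0_eq_submatrix [Fintype B₀] [DecidableEq B₀] (Z : Matrix (A₀ × A₁) (A₀ × A₁) ℂ) :
    piB0 Z = (Fintype.card B₀ : ℂ)⁻¹ • (Z ⊗ₖ (1 : Matrix B₀ B₀ ℂ)).submatrix
      (Equiv.prodAssoc A₀ A₁ B₀).symm (Equiv.prodAssoc A₀ A₁ B₀).symm := by
  ext x y
  simp [piB0, one_apply]

theorem trA1B1_eq_trOut [Fintype A₁] [Fintype B₁]
    (Y : Matrix (A₀ × A₁ × B₀ × B₁) (A₀ × A₁ × B₀ × B₁) ℂ) :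
    trA1B1 Y = trOut (Y.submatrix splitA1B1.symm splitA1B1.symm) := by
  ext x y
  simp [trA1B1, trOut, splitA1B1, Fintype.sum_prod_type]

variable [Fintype A₀] [Fintype A₁] [Fintype B₀]

theorem trace_piB0_mul [DecidableEq B₀] (Z : Matrix (A₀ × A₁) (A₀ × A₁) ℂ)
    (Q : Matrix (A₀ × A₁ × B₀) (A₀ × A₁ × B₀) ℂ) :
    trace (piB0 Z * Q) = (Fintype.card B₀ : ℂ)⁻¹ * trace (Z * trB0Last Q) := by
  rw [piB0_eq_submatrix, smul_mul, trace_smul, trace_submatrix_equiv_mul,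
    trace_kronecker_one_mul, smul_eq_mul]
  rfl

variable [Fintype B₁] {J M Y : Matrix (A₀ × A₁ × B₀ × B₁) (A₀ × A₁ × B₀ × B₁) ℂ}
  {N : Matrix (A₀ × B₀) (A₀ × B₀) ℂ} {P : Matrix (A₀ × B₀ × B₁) (A₀ × B₀ × B₁) ℂ}
  {Q : Matrix (A₀ × A₁ × B₀) (A₀ × A₁ × B₀) ℂ}

theorem trace_embedN_mul [DecidableEq A₁] [DecidableEq B₁] :
    trace (embedN N * Y) = trace (N * trA1B1 Y) := by
  rw [embedN_eq_submatrix, trace_submatrix_equiv_mul, trace_kronecker_one_mul, trA1B1_eq_trOut]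

theorem trace_embedP_mul [DecidableEq A₁] : trace (embedP P * Y) = trace (P * trA1 Y) := by
  rw [embedP_eq_submatrix, trace_submatrix_equiv_mul, trace_kronecker_one_mul]
  rfl

theorem trace_embedQ_mul [DecidableEq B₁] : trace (embedQ Q * Y) = trace (Q * trB1 Y) := by
  rw [embedQ_eq_submatrix, trace_submatrix_equiv_mul, trace_kronecker_one_mul]
  rfl

theorem trace_embedP_mul_eq_zero [DecidableEq A₀] [DecidableEq A₁] (hP : trInp P = 0)
    {Z : Matrix (B₀ × B₁) (B₀ × B₁) ℂ} (hY : trA1 Y = piFst Z) :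
    trace (embedP P * Y) = 0 := by
  rw [trace_embedP_mul, hY, trace_mul_comm, trace_piFst_mul, hP]
  simp

theorem trace_embedQ_mul_eq_zero [DecidableEq B₀] [DecidableEq B₁] (hQ : trB0Last Q = 0)
    {Z : Matrix (A₀ × A₁) (A₀ × A₁) ℂ} (hY : trB1 Y = piB0 Z) :
    trace (embedQ Q * Y) = 0 := by
  rw [trace_embedQ_mul, hY, trace_mul_comm, trace_piB0_mul, hQ]
  simp

theorem weak_duality_dmax_general
    [DecidableEq A₀] [DecidableEq A₁] [DecidableEq B₀] [DecidableEq B₁]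
    {l : ℝ} (hJ : J.PosSemidef) (hJY : LoewnerLE J Y)
    (hY : trA1B1 Y = l • (1 : Matrix (A₀ × B₀) (A₀ × B₀) ℂ)) (hYns : NS Y)
    (hM : M.PosSemidef) (hP : trInp P = 0) (hQ : trB0Last Q = 0)
    (hdual : LoewnerLE M (embedN N + embedP P + embedQ Q)) :
    trace (M * J) ≤ l * trace N :=
  calc
    trace (M * J) ≤ trace ((embedN N + embedP P + embedQ Q) * Y) :=
      hdual.trace_mul_le hJY hM (hJY.posSemidef hJ)
    _ = trace (embedN N * Y) := by
      rw [add_mul, add_mul, trace_add, trace_add, trace_embedP_mul_eq_zero hP hYns.1,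
        trace_embedQ_mul_eq_zero hQ hYns.2, add_zero, add_zero]
    _ = l * trace N := by
      rw [trace_embedN_mul, hY, Matrix.mul_smul, Matrix.mul_one, trace_smul, Complex.real_smul]

end FourSystems

/-- Weak duality for the SDP of the max-relative entropy of bidirectional classical
communication: any primal feasible `(λ, Y)` and dual feasible `(M, N, P, Q)` satisfy
`Re Tr(M J) ≤ λ`. -/
theorem weak_duality_dmax
    {A₀ A₁ B₀ B₁ : Type*}
    [Fintype A₀] [Fintype A₁] [Fintype B₀] [Fintype B₁]
    [DecidableEq A₀] [DecidableEq A₁] [DecidableEq B₀] [DecidableEq B₁]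
    [Nonempty A₀] [Nonempty A₁] [Nonempty B₀] [Nonempty B₁]
    (J : Matrix (A₀ × A₁ × B₀ × B₁) (A₀ × A₁ × B₀ × B₁) ℂ) (hJ : J.PosSemidef)
    (l : ℝ) (Y : Matrix (A₀ × A₁ × B₀ × B₁) (A₀ × A₁ × B₀ × B₁) ℂ)
    (hY₁ : LoewnerLE J Y)
    (hY₂ : trA1B1 Y = l • (1 : Matrix (A₀ × B₀) (A₀ × B₀) ℂ))
    (hY₃ : trA1 Y = piFst (trA0A1 Y))
    (hY₄ : trB1 Y = piB0 (trB0B1 Y))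
    (M : Matrix (A₀ × A₁ × B₀ × B₁) (A₀ × A₁ × B₀ × B₁) ℂ)
    (N : Matrix (A₀ × B₀) (A₀ × B₀) ℂ)
    (P : Matrix (A₀ × B₀ × B₁) (A₀ × B₀ × B₁) ℂ)
    (Q : Matrix (A₀ × A₁ × B₀) (A₀ × A₁ × B₀) ℂ)
    (hM : M.PosSemidef)
    (hN₁ : N.IsHermitian) (hN₂ : Matrix.trace N = 1)
    (hP₁ : P.IsHermitian) (hP₂ : trInp P = 0)
    (hQ₁ : Q.IsHermitian) (hQ₂ : trB0Last Q = 0)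
    (hdual : LoewnerLE M (embedN N + embedP P + embedQ Q)) :
    (Matrix.trace (M * J)).re ≤ l := by
  simpa [hN₂] using
    (Complex.le_def.mp (weak_duality_dmax_general hJ hY₁ hY₂ ⟨hY₃, hY₄⟩ hM hP₂ hQ₂ hdual)).1
end
end

section
/- Tensor products of primal feasible solutions for the bipartite conditional min-entropy SDP are feasible: let K₁, indexed by A₀ × B₀ × B₁, and K₂, indexed by A₀' × B₀' × B₁', be positive semidefinite. If (m₁, X₁) is feasible for K₁ (i.e. Tr_{B₁} X₁ = m₁ • I_{B₀} and K₁ ≤ I_{A₀} ⊗ X₁) and (m₂, X₂) is feasible for K₂, then (m₁ · m₂, X₁ ⊠ X₂) is feasible for K₁ ⊠ K₂: Tr_{B₁ × B₁'} (X₁ ⊠ X₂) = (m₁ m₂) • I_{B₀ × B₀'} and K₁ ⊠ K₂ ≤ I_{A₀ × A₀'} ⊗ (X₁ ⊠ X₂). In particular μ(K₁ ⊠ K₂) ≤ μ(K₁) · μ(K₂). -/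
/-!
The Kronecker product is monotone on positive semidefinite matrices: if `A ≤ B` and `C ≤ D` then
`B ⊗ D - A ⊗ C = (B - A) ⊗ D + A ⊗ (D - C)` is a sum of two positive semidefinite matrices. Since
the partial trace and `X ↦ I ⊗ X` are multiplicative under tensor products, a product of feasible
points is feasible. Hence `μ(K₁ ⊠ K₂) ≤ m₁ m₂` for all feasible values `m₁` of `K₁` and `m₂` of
`K₂`, and this bound passes to the infima because these lie in the closures of the sets of values.
-/

open Matrix
open scoped ComplexOrder

noncomputable section

/-- The optimal value `μ(K)` of the SDP whose negative logarithm is the bipartite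
conditional min-entropy `H_min(𝐀|𝐁)` (for `K = Tr_{A₁} J` of a channel Choi matrix `J`). -/
def mu {A₀ B₀ B₁ : Type*} [Fintype A₀] [Fintype B₀] [Fintype B₁]
    [DecidableEq A₀] [DecidableEq B₀]
    (K : Matrix (A₀ × B₀ × B₁) (A₀ × B₀ × B₁) ℂ) : ℝ :=
  sInf {m : ℝ | ∃ X : Matrix (B₀ × B₁) (B₀ × B₁) ℂ,
    trOut X = m • (1 : Matrix B₀ B₀ ℂ) ∧ LoewnerLE K (idFst X)}

/-- `Tr_{B₁}` of a matrix on `A₀ × B₀ × B₁`. -/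
def trLast3 {A₀ B₀ B₁ : Type*} [Fintype B₁]
    (K : Matrix (A₀ × B₀ × B₁) (A₀ × B₀ × B₁) ℂ) : Matrix (A₀ × B₀) (A₀ × B₀) ℂ :=
  fun x y => ∑ b : B₁, K (x.1, x.2, b) (y.1, y.2, b)

/-- Kronecker product of matrices on three-fold systems, reindexed to
`(A₀ × A₀') × (B₀ × B₀') × (B₁ × B₁')`. -/
def kron3 {A₀ B₀ B₁ A₀' B₀' B₁' : Type*}
    (K₁ : Matrix (A₀ × B₀ × B₁) (A₀ × B₀ × B₁) ℂ)
    (K₂ : Matrix (A₀' × B₀' × B₁') (A₀' × B₀' × B₁') ℂ) :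
    Matrix ((A₀ × A₀') × (B₀ × B₀') × (B₁ × B₁'))
      ((A₀ × A₀') × (B₀ × B₀') × (B₁ × B₁')) ℂ :=
  fun x y =>
    K₁ (x.1.1, x.2.1.1, x.2.2.1) (y.1.1, y.2.1.1, y.2.2.1) *
    K₂ (x.1.2, x.2.1.2, x.2.2.2) (y.1.2, y.2.1.2, y.2.2.2)

/-- Kronecker product of matrices on two-fold systems, reindexed to `(S × S') × (T × T')`. -/
def kron2 {S T S' T' : Type*}
    (X₁ : Matrix (S × T) (S × T) ℂ) (X₂ : Matrix (S' × T') (S' × T') ℂ) :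
    Matrix ((S × S') × (T × T')) ((S × S') × (T × T')) ℂ :=
  fun x y => X₁ (x.1.1, x.2.1) (y.1.1, y.2.1) * X₂ (x.1.2, x.2.2) (y.1.2, y.2.2)

open scoped Kronecker

lemma le_csInf_mul_csInf {α : Type*} [ConditionallyCompleteLinearOrder α] [Mul α]
    [TopologicalSpace α] [OrderTopology α] [ContinuousMul α] {s t : Set α} {a : α}
    (hs : s.Nonempty) (hs' : BddBelow s) (ht : t.Nonempty) (ht' : BddBelow t)
    (h : ∀ x ∈ s, ∀ y ∈ t, a ≤ x * y) : a ≤ sInf s * sInf t := by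
  have mem_closure : sInf s * sInf t ∈ closure (Set.Ici a) :=
    map_mem_closure₂ continuous_mul (csInf_mem_closure hs hs') (csInf_mem_closure ht ht') h
  rwa [closure_Ici] at mem_closure

namespace LoewnerLE

variable {m n : Type*} [Fintype m] [Fintype n]

lemma posSemidef_s14 {A B : Matrix n n ℂ} (h : LoewnerLE A B) (hA : A.PosSemidef) : B.PosSemidef := by
  simpa using h.add hA

lemma submatrix {A B : Matrix n n ℂ} (h : LoewnerLE A B) (f : m → n) :
    LoewnerLE (A.submatrix f f) (B.submatrix f f) :=
  PosSemidef.submatrix h f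

lemma kronecker {A B : Matrix m m ℂ} {C D : Matrix n n ℂ} (hAB : LoewnerLE A B)
    (hCD : LoewnerLE C D) (hA : A.PosSemidef) (hC : C.PosSemidef) :
    LoewnerLE (A ⊗ₖ C) (B ⊗ₖ D) := by
  have telescope : B ⊗ₖ D - A ⊗ₖ C = (B - A) ⊗ₖ D + A ⊗ₖ (D - C) := by
    ext i j
    simp only [Matrix.sub_apply, Matrix.add_apply, kroneckerMap_apply]
    ring
  rw [LoewnerLE, telescope]
  exact (PosSemidef.kronecker hAB (hCD.posSemidef_s14 hC)).add (hA.kronecker hCD)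

end LoewnerLE

section Bipartite

variable {S T S' T' : Type*}

lemma posSemidef_of_idFst [Nonempty S] [DecidableEq S] {X : Matrix T T ℂ}
    (h : (idFst X : Matrix (S × T) (S × T) ℂ).PosSemidef) : X.PosSemidef := by
  obtain ⟨s⟩ := ‹Nonempty S›
  have block : (idFst X).submatrix (Prod.mk s) (Prod.mk s) = X := by
    ext t t'
    simp [idFst]
  exact block ▸ h.submatrix (Prod.mk s)

lemma posSemidef_trOut [Fintype T] {X : Matrix (S × T) (S × T) ℂ} (hX : X.PosSemidef) :
    (trOut X).PosSemidef := by
  have sum_blocks : trOut X = ∑ t, X.submatrix (·, t) (·, t) := by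
    ext s s'
    simp [trOut, Matrix.sum_apply]
  exact sum_blocks ▸ posSemidef_sum _ fun t _ => hX.submatrix (·, t)

lemma trOut_kron2 [Fintype T] [Fintype T'] (X : Matrix (S × T) (S × T) ℂ)
    (X' : Matrix (S' × T') (S' × T') ℂ) : trOut (kron2 X X') = trOut X ⊗ₖ trOut X' := by
  ext ⟨s, s'⟩ ⟨u, u'⟩
  simp [trOut, kron2, Fintype.sum_prod_type, Finset.sum_mul_sum]

end Bipartite

section Tripartite

variable {A₀ B₀ B₁ A₀' B₀' B₁' : Type*}

lemma kron3_eq_submatrix (K₁ : Matrix (A₀ × B₀ × B₁) (A₀ × B₀ × B₁) ℂ)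
    (K₂ : Matrix (A₀' × B₀' × B₁') (A₀' × B₀' × B₁') ℂ) :
    kron3 K₁ K₂ = (K₁ ⊗ₖ K₂).submatrix
      (fun x => ((x.1.1, x.2.1.1, x.2.2.1), (x.1.2, x.2.1.2, x.2.2.2)))
      (fun x => ((x.1.1, x.2.1.1, x.2.2.1), (x.1.2, x.2.1.2, x.2.2.2))) :=
  rfl

lemma kron3_idFst [DecidableEq A₀] [DecidableEq A₀'] (X₁ : Matrix (B₀ × B₁) (B₀ × B₁) ℂ)
    (X₂ : Matrix (B₀' × B₁') (B₀' × B₁') ℂ) :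
    kron3 (idFst X₁ : Matrix (A₀ × B₀ × B₁) (A₀ × B₀ × B₁) ℂ)
        (idFst X₂ : Matrix (A₀' × B₀' × B₁') (A₀' × B₀' × B₁') ℂ) =
      idFst (kron2 X₁ X₂) := by
  ext x y
  by_cases h : x.1.1 = y.1.1 <;> by_cases h' : x.1.2 = y.1.2 <;>
    simp [kron3, idFst, kron2, Prod.ext_iff, h, h']

variable {K₁ : Matrix (A₀ × B₀ × B₁) (A₀ × B₀ × B₁) ℂ}
  {K₂ : Matrix (A₀' × B₀' × B₁') (A₀' × B₀' × B₁') ℂ}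

lemma posSemidef_kron3 [Finite A₀] [Finite B₀] [Finite B₁] [Finite A₀'] [Finite B₀'] [Finite B₁']
    (hK₁ : K₁.PosSemidef) (hK₂ : K₂.PosSemidef) : (kron3 K₁ K₂).PosSemidef :=
  kron3_eq_submatrix K₁ K₂ ▸ (hK₁.kronecker hK₂).submatrix _

variable [Fintype A₀] [Fintype B₀] [Fintype B₁] [Fintype A₀'] [Fintype B₀'] [Fintype B₁']

lemma LoewnerLE.kron3 {M₁ : Matrix (A₀ × B₀ × B₁) (A₀ × B₀ × B₁) ℂ}
    {M₂ : Matrix (A₀' × B₀' × B₁') (A₀' × B₀' × B₁') ℂ} (h₁ : LoewnerLE K₁ M₁)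
    (h₂ : LoewnerLE K₂ M₂) (hK₁ : K₁.PosSemidef) (hK₂ : K₂.PosSemidef) :
    LoewnerLE (kron3 K₁ K₂) (kron3 M₁ M₂) := by
  simpa only [kron3_eq_submatrix] using (h₁.kronecker h₂ hK₁ hK₂).submatrix _

variable [DecidableEq A₀] [DecidableEq B₀] [DecidableEq A₀'] [DecidableEq B₀']

/-- Primal feasibility of the pair `(m, X)` for the semidefinite program whose value is `mu K`. -/
structure MuFeasible (K : Matrix (A₀ × B₀ × B₁) (A₀ × B₀ × B₁) ℂ) (m : ℝ)
    (X : Matrix (B₀ × B₁) (B₀ × B₁) ℂ) : Prop where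
  trOut_eq : trOut X = m • (1 : Matrix B₀ B₀ ℂ)
  loewnerLE : LoewnerLE K (idFst X)

lemma mu_eq_sInf (K : Matrix (A₀ × B₀ × B₁) (A₀ × B₀ × B₁) ℂ) :
    mu K = sInf {m | ∃ X, MuFeasible K m X} :=
  congrArg sInf <| Set.ext fun _ => exists_congr fun _ =>
    ⟨fun ⟨htr, hle⟩ => ⟨htr, hle⟩, fun ⟨htr, hle⟩ => ⟨htr, hle⟩⟩

namespace MuFeasible

variable {K : Matrix (A₀ × B₀ × B₁) (A₀ × B₀ × B₁) ℂ} {m m₁ m₂ : ℝ}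
  {X X₁ : Matrix (B₀ × B₁) (B₀ × B₁) ℂ} {X₂ : Matrix (B₀' × B₁') (B₀' × B₁') ℂ}

lemma kron3 (h₁ : MuFeasible K₁ m₁ X₁) (h₂ : MuFeasible K₂ m₂ X₂) (hK₁ : K₁.PosSemidef)
    (hK₂ : K₂.PosSemidef) : MuFeasible (kron3 K₁ K₂) (m₁ * m₂) (kron2 X₁ X₂) where
  trOut_eq := by
    rw [trOut_kron2, h₁.trOut_eq, h₂.trOut_eq, smul_kronecker, kronecker_smul, one_kronecker_one,
      smul_smul]
  loewnerLE := by
    rw [← kron3_idFst]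
    exact h₁.loewnerLE.kron3 h₂.loewnerLE hK₁ hK₂

lemma nonneg [Nonempty A₀] [Nonempty B₀] (h : MuFeasible K m X) (hK : K.PosSemidef) :
    0 ≤ m := by
  obtain ⟨b⟩ := ‹Nonempty B₀›
  have hX : X.PosSemidef := posSemidef_of_idFst (h.loewnerLE.posSemidef_s14 hK)
  have hm : (m • (1 : Matrix B₀ B₀ ℂ)).PosSemidef := h.trOut_eq ▸ posSemidef_trOut hX
  simpa using hm.diag_nonneg (i := b)

lemma bddBelow [Nonempty A₀] [Nonempty B₀] (hK : K.PosSemidef) :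
    BddBelow {m | ∃ X, MuFeasible K m X} :=
  ⟨0, fun _ ⟨_, h⟩ => h.nonneg hK⟩

lemma mu_le [Nonempty A₀] [Nonempty B₀] (h : MuFeasible K m X) (hK : K.PosSemidef) :
    mu K ≤ m :=
  mu_eq_sInf K ▸ csInf_le (bddBelow hK) ⟨X, h⟩

end MuFeasible

end Tripartite

/-- Tensor products of primal feasible solutions for the bipartite conditional
min-entropy SDP are feasible, and in particular `μ(K₁ ⊠ K₂) ≤ μ(K₁) · μ(K₂)`. -/
theorem mu_primal_feasible_tensor
    {A₀ B₀ B₁ A₀' B₀' B₁' : Type*}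
    [Fintype A₀] [Fintype B₀] [Fintype B₁] [Fintype A₀'] [Fintype B₀'] [Fintype B₁']
    [DecidableEq A₀] [DecidableEq B₀] [DecidableEq B₁]
    [DecidableEq A₀'] [DecidableEq B₀'] [DecidableEq B₁']
    [Nonempty A₀] [Nonempty B₀] [Nonempty B₁] [Nonempty A₀'] [Nonempty B₀'] [Nonempty B₁']
    (K₁ : Matrix (A₀ × B₀ × B₁) (A₀ × B₀ × B₁) ℂ)
    (K₂ : Matrix (A₀' × B₀' × B₁') (A₀' × B₀' × B₁') ℂ)
    (hK₁ : K₁.PosSemidef) (hK₂ : K₂.PosSemidef)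
    (m₁ m₂ : ℝ)
    (X₁ : Matrix (B₀ × B₁) (B₀ × B₁) ℂ) (X₂ : Matrix (B₀' × B₁') (B₀' × B₁') ℂ)
    (hX₁₁ : trOut X₁ = m₁ • (1 : Matrix B₀ B₀ ℂ)) (hX₁₂ : LoewnerLE K₁ (idFst X₁))
    (hX₂₁ : trOut X₂ = m₂ • (1 : Matrix B₀' B₀' ℂ)) (hX₂₂ : LoewnerLE K₂ (idFst X₂)) :
    (trOut (kron2 X₁ X₂) = (m₁ * m₂) • (1 : Matrix (B₀ × B₀') (B₀ × B₀') ℂ) ∧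
      LoewnerLE (kron3 K₁ K₂) (idFst (kron2 X₁ X₂))) ∧
    mu (kron3 K₁ K₂) ≤ mu K₁ * mu K₂ := by
  have h₁ : MuFeasible K₁ m₁ X₁ := ⟨hX₁₁, hX₁₂⟩
  have h₂ : MuFeasible K₂ m₂ X₂ := ⟨hX₂₁, hX₂₂⟩
  have h := h₁.kron3 h₂ hK₁ hK₂
  refine ⟨⟨h.trOut_eq, h.loewnerLE⟩, ?_⟩
  rw [mu_eq_sInf K₁, mu_eq_sInf K₂]
  refine le_csInf_mul_csInf ⟨m₁, X₁, h₁⟩ (MuFeasible.bddBelow hK₁) ⟨m₂, X₂, h₂⟩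
    (MuFeasible.bddBelow hK₂) ?_
  rintro a ⟨X, hX⟩ b ⟨Y, hY⟩
  exact (hX.kron3 hY hK₁ hK₂).mu_le (posSemidef_kron3 hK₁ hK₂)
end
end
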